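/- arXiv:2510.01522 — 3 statements merged into one kernel-verified Lean document; each statement's English description precedes it below -/
import Mathlib

section
/- Let m ∈ ℕ with m ≥ 2 and let ε ∈ (0, 1/2). For any z ∈ ℂ_1^n with ℓ_1(z, z*) ≤ ε², any V ∈ 𝒱_m with ℓ_m(V, z*) ≤ ε², and any real t > 0, one has ℓ_m(F_m(V), F_1(z)) ≤ (4n²/t²)·(6ε + σ‖W‖/n)²·ℓ_m(V, z) + (4/n)·Σ_{j=1}^n 1{|[Yz]_j| < t}. -/
open scoped Classical
open Matrix

noncomputable section

namespace PhaseSync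

/-- Euclidean norm of a complex vector. -/
def enorm {k : ℕ} (v : Fin k → ℂ) : ℝ := Real.sqrt (∑ i, ‖v i‖ ^ 2)

/-- Frobenius norm of a complex matrix. -/
def fnorm {k l : ℕ} (A : Matrix (Fin k) (Fin l) ℂ) : ℝ :=
  Real.sqrt (∑ i, ∑ j, ‖A i j‖ ^ 2)

/-- L2 operator norm of a square complex matrix. -/
def opNorm {k : ℕ} (A : Matrix (Fin k) (Fin k) ℂ) : ℝ :=
  ‖Matrix.toEuclideanCLM (𝕜 := ℂ) (n := Fin k) A‖

/-- Indicator function of a proposition. -/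
def ind (P : Prop) : ℝ := if P then 1 else 0

/-- The loss ℓ_m(V, z) = min_{a : ‖a‖=1} ‖V - a zᴴ‖_F² / n. -/
def lossM {k l : ℕ} (V : Matrix (Fin k) (Fin l) ℂ) (z : Fin l → ℂ) : ℝ :=
  sInf { r : ℝ | ∃ a : Fin k → ℂ, enorm a = 1 ∧
    r = fnorm (V - Matrix.vecMulVec a (star z)) ^ 2 / l }

/-- The loss ℓ_1(z', z) = min_{|a|=1} ‖z' - a z‖² / n. -/
def loss1 {l : ℕ} (z' z : Fin l → ℂ) : ℝ :=
  sInf { r : ℝ | ∃ a : ℂ, ‖a‖ = 1 ∧ r = enorm (z' - a • z) ^ 2 / l }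

/-- The mapping F₁: entrywise normalization of Y z. -/
def F1 {l : ℕ} (Y : Matrix (Fin l) (Fin l) ℂ) (z : Fin l → ℂ) : Fin l → ℂ :=
  fun j => if Y.mulVec z j ≠ 0 then Y.mulVec z j / (‖Y.mulVec z j‖ : ℂ) else z j

/-- jth column of a matrix. -/
def col {k l : ℕ} (A : Matrix (Fin k) (Fin l) ℂ) (j : Fin l) : Fin k → ℂ := fun i => A i j

/-- The mapping F_m: columnwise normalization of V Yᴴ. -/
def Fm {k l : ℕ} (Y : Matrix (Fin l) (Fin l) ℂ) (V : Matrix (Fin k) (Fin l) ℂ) :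
    Matrix (Fin k) (Fin l) ℂ :=
  Matrix.of fun i j =>
    if col (V * Yᴴ) j ≠ 0 then (V * Yᴴ) i j / ((enorm (col (V * Yᴴ) j) : ℝ) : ℂ) else V i j

/-- g_t(x) = x / max(|x|, t). -/
def gfun (t : ℝ) (x : ℂ) : ℂ := x / ((max ‖x‖ t : ℝ) : ℂ)

/-- The mapping G(z, s, t), coordinatewise g_t(z*_j s + σ [W z]_j). -/
def G {l : ℕ} (zstar : Fin l → ℂ) (σ : ℝ) (W : Matrix (Fin l) (Fin l) ℂ)
    (z : Fin l → ℂ) (s : ℂ) (t : ℝ) : Fin l → ℂ :=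
  fun j => gfun t (zstar j * s + (σ : ℂ) * W.mulVec z j)

/-- The mapping F₁'(z, s), entrywise normalization of z* s + σ W z. -/
def F1' {l : ℕ} (zstar : Fin l → ℂ) (σ : ℝ) (W : Matrix (Fin l) (Fin l) ℂ)
    (z : Fin l → ℂ) (s : ℂ) : Fin l → ℂ :=
  fun j =>
    if zstar j * s + (σ : ℂ) * W.mulVec z j ≠ 0 then
      (zstar j * s + (σ : ℂ) * W.mulVec z j) /
        ((‖zstar j * s + (σ : ℂ) * W.mulVec z j‖ : ℝ) : ℂ)
    else z j

/-- W with jth row and column zeroed out. -/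
def Wminus {l : ℕ} (W : Matrix (Fin l) (Fin l) ℂ) (j : Fin l) : Matrix (Fin l) (Fin l) ℂ :=
  Matrix.of fun k i => if k = j ∨ i = j then 0 else W k i

/-!
Let `a` be a unit minimizer in `ℓ_m(V, z)` and `D = V - a zᴴ` the residual. Column by column,
`F_m(V)` and `a F_1(z)ᴴ` are the normalizations of `V Yᴴ` and `a (Y z)ᴴ`, whose difference is
`D Yᴴ`. Normalization is `2 / t`-Lipschitz at columns with `|[Y z]_j| ≥ t`, and any two unit
vectors are at squared distance at most `4`, so it remains to bound
`‖D Yᴴ‖_F ≤ ‖D z*‖ ‖z*‖ + σ ‖W‖ ‖D‖_F`. The minimizer is the direction of `V z`, which makes `D z`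
quadratically small: `‖D z‖ = ‖D‖_F² / 2`. As `z*` is `ε √n`-close to a phase multiple of `z`, and
`‖D‖_F ≤ 2 ε √n` by the triangle inequality, this gives `‖D z*‖ ≤ 2 ε √n ‖D‖_F`.
-/

open WithLp

section Direction

variable (𝕜 : Type*) {E : Type*} [RCLike 𝕜]

/-- `u` is a unit vector pointing in the direction of `x`. For `x = 0` every unit vector qualifies,
so that the notion covers normalization maps whatever unit vector they assign to `0`. -/
def IsDirection [NormedAddCommGroup E] [NormedSpace 𝕜 E] (u x : E) : Prop :=
  ‖u‖ = 1 ∧ x = (‖x‖ : 𝕜) • u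

variable {𝕜}

section NormedSpace

variable [NormedAddCommGroup E] [NormedSpace 𝕜 E] {u v x y : E}

lemma isDirection_zero (hu : ‖u‖ = 1) : IsDirection 𝕜 u 0 :=
  ⟨hu, by simp⟩

lemma isDirection_inv_norm_smul (hx : x ≠ 0) : IsDirection 𝕜 ((‖x‖ : 𝕜)⁻¹ • x) x := by
  have hx' : (‖x‖ : 𝕜) ≠ 0 := by simpa using hx
  exact ⟨norm_smul_inv_norm hx, (smul_inv_smul₀ hx' x).symm⟩

lemma exists_isDirection (hu : ‖u‖ = 1) (x : E) : ∃ a, IsDirection 𝕜 a x := by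
  rcases eq_or_ne x 0 with rfl | hx
  · exact ⟨u, isDirection_zero hu⟩
  · exact ⟨_, isDirection_inv_norm_smul hx⟩

lemma IsDirection.star_smul {c w : 𝕜} (hc : IsDirection 𝕜 c w) (hu : ‖u‖ = 1) :
    IsDirection 𝕜 (star c • u) (star w • u) := by
  refine ⟨by rw [norm_smul, norm_star, hc.1, hu, one_mul], ?_⟩
  rw [norm_smul, norm_star, hu, mul_one, smul_smul]
  conv_lhs => rw [hc.2]
  simp

lemma IsDirection.norm_mul_norm_sub_le (hu : IsDirection 𝕜 u x) (hv : IsDirection 𝕜 v y) :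
    ‖y‖ * ‖u - v‖ ≤ 2 * ‖x - y‖ := by
  have hsplit : (‖y‖ : 𝕜) • (u - v) = ((‖y‖ - ‖x‖ : ℝ) : 𝕜) • u + (x - y) := by
    rw [RCLike.ofReal_sub, sub_smul, smul_sub, ← hu.2, ← hv.2]
    abel
  calc ‖y‖ * ‖u - v‖ = ‖(‖y‖ : 𝕜) • (u - v)‖ := by simp [norm_smul]
    _ ≤ ‖((‖y‖ - ‖x‖ : ℝ) : 𝕜) • u‖ + ‖x - y‖ := hsplit ▸ norm_add_le _ _
    _ = |‖x‖ - ‖y‖| + ‖x - y‖ := by rw [norm_smul, RCLike.norm_ofReal, hu.1, mul_one, abs_sub_comm]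
    _ ≤ 2 * ‖x - y‖ := by linarith [abs_norm_sub_norm_le x y]

lemma IsDirection.sq_norm_sub_le {t : ℝ} (ht : 0 < t) (hu : IsDirection 𝕜 u x)
    (hv : IsDirection 𝕜 v y) :
    ‖u - v‖ ^ 2 ≤ 4 / t ^ 2 * ‖x - y‖ ^ 2 + 4 * ind (‖y‖ < t) := by
  by_cases hy : ‖y‖ < t
  · have hle_two : ‖u - v‖ ≤ 2 := (norm_sub_le u v).trans (by rw [hu.1, hv.1]; norm_num)
    calc ‖u - v‖ ^ 2 ≤ 2 ^ 2 := by gcongr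
      _ ≤ 4 / t ^ 2 * ‖x - y‖ ^ 2 + 4 * ind (‖y‖ < t) := by
        rw [ind, if_pos hy]
        linarith [show 0 ≤ 4 / t ^ 2 * ‖x - y‖ ^ 2 by positivity]
  · have hlipschitz : ‖u - v‖ ≤ 2 * ‖x - y‖ / t := by
      rw [le_div_iff₀' ht]
      exact (mul_le_mul_of_nonneg_right (not_lt.1 hy) (norm_nonneg _)).trans
        (hu.norm_mul_norm_sub_le hv)
    calc ‖u - v‖ ^ 2 ≤ (2 * ‖x - y‖ / t) ^ 2 := by gcongr
      _ = 4 / t ^ 2 * ‖x - y‖ ^ 2 + 4 * ind (‖y‖ < t) := by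
        rw [ind, if_neg hy]
        ring

end NormedSpace

lemma IsDirection.inner_eq_norm [NormedAddCommGroup E] [InnerProductSpace 𝕜 E] {u x : E}
    (hu : IsDirection 𝕜 u x) : inner 𝕜 u x = (‖x‖ : 𝕜) := by
  conv_lhs => rw [hu.2]
  simp [inner_smul_right, inner_self_eq_norm_sq_to_K, hu.1]

end Direction

section Norms

variable {k l : ℕ}

lemma enorm_eq_norm_toLp (v : Fin k → ℂ) : enorm v = ‖toLp 2 v‖ :=
  (EuclideanSpace.norm_eq _).symm

lemma enorm_nonneg (v : Fin k → ℂ) : 0 ≤ enorm v := Real.sqrt_nonneg _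

lemma enorm_sq (v : Fin k → ℂ) : enorm v ^ 2 = ∑ i, ‖v i‖ ^ 2 := Real.sq_sqrt (by positivity)

lemma enorm_add_le (v w : Fin k → ℂ) : enorm (v + w) ≤ enorm v + enorm w := by
  simpa only [enorm_eq_norm_toLp, toLp_add] using norm_add_le (toLp 2 v) (toLp 2 w)

lemma enorm_smul (c : ℂ) (v : Fin k → ℂ) : enorm (c • v) = ‖c‖ * enorm v := by
  simpa only [enorm_eq_norm_toLp, toLp_smul] using norm_smul c (toLp 2 v)

lemma enorm_star (v : Fin k → ℂ) : enorm (star v) = enorm v := by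
  simp [enorm]

lemma enorm_eq_sqrt_of_norm_eq_one {v : Fin k → ℂ} (hv : ∀ i, ‖v i‖ = 1) : enorm v = √k := by
  simp [enorm, hv]

lemma fnorm_nonneg (A : Matrix (Fin k) (Fin l) ℂ) : 0 ≤ fnorm A := Real.sqrt_nonneg _

lemma fnorm_sq_eq_sum_col (A : Matrix (Fin k) (Fin l) ℂ) :
    fnorm A ^ 2 = ∑ j, enorm (col A j) ^ 2 := by
  rw [fnorm, Real.sq_sqrt (by positivity), Finset.sum_comm]
  simp only [enorm_sq, col]

lemma fnorm_eq_sqrt_of_enorm_col_eq_one {A : Matrix (Fin k) (Fin l) ℂ}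
    (hA : ∀ j, enorm (col A j) = 1) : fnorm A = √l := by
  rw [← Real.sqrt_sq (fnorm_nonneg A), fnorm_sq_eq_sum_col]
  simp [hA]

section Frobenius

open scoped Matrix.Norms.Frobenius

lemma fnorm_eq_norm (A : Matrix (Fin k) (Fin l) ℂ) : fnorm A = ‖A‖ := by
  simp [fnorm, frobenius_norm_def, Real.sqrt_eq_rpow]

lemma fnorm_add_le (A B : Matrix (Fin k) (Fin l) ℂ) : fnorm (A + B) ≤ fnorm A + fnorm B := by
  simpa only [fnorm_eq_norm] using norm_add_le A B

lemma fnorm_smul (c : ℂ) (A : Matrix (Fin k) (Fin l) ℂ) : fnorm (c • A) = ‖c‖ * fnorm A := by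
  simpa only [fnorm_eq_norm] using norm_smul c A

lemma fnorm_conjTranspose (A : Matrix (Fin k) (Fin l) ℂ) : fnorm Aᴴ = fnorm A := by
  simpa only [fnorm_eq_norm] using frobenius_norm_conjTranspose A

lemma enorm_mulVec_le_fnorm_mul (A : Matrix (Fin k) (Fin l) ℂ) (v : Fin l → ℂ) :
    enorm (A *ᵥ v) ≤ fnorm A * enorm v := by
  simpa only [fnorm_eq_norm, enorm_eq_norm_toLp, ← replicateCol_mulVec,
    frobenius_norm_replicateCol] using frobenius_norm_mul A (replicateCol Unit v)

end Frobenius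

lemma col_vecMulVec (a : Fin k → ℂ) (b : Fin l → ℂ) (j : Fin l) :
    col (vecMulVec a b) j = b j • a := by
  ext i
  simp [col, vecMulVec_apply, mul_comm]

lemma fnorm_vecMulVec (a : Fin k → ℂ) (b : Fin l → ℂ) :
    fnorm (vecMulVec a b) = enorm a * enorm b := by
  refine (pow_left_inj₀ (fnorm_nonneg _) (mul_nonneg (enorm_nonneg _) (enorm_nonneg _))
    two_ne_zero).1 ?_
  simp only [fnorm_sq_eq_sum_col, col_vecMulVec, enorm_smul, mul_pow]
  rw [← Finset.sum_mul, mul_comm, enorm_sq b]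

lemma enorm_mulVec_le_opNorm_mul (A : Matrix (Fin k) (Fin k) ℂ) (v : Fin k → ℂ) :
    enorm (A *ᵥ v) ≤ opNorm A * enorm v := by
  rw [enorm_eq_norm_toLp, enorm_eq_norm_toLp]
  exact (toEuclideanCLM (𝕜 := ℂ) (n := Fin k) A).le_opNorm (toLp 2 v)

lemma opNorm_nonneg (A : Matrix (Fin k) (Fin k) ℂ) : 0 ≤ opNorm A := norm_nonneg _

lemma fnorm_mul_le_opNorm_mul (A : Matrix (Fin k) (Fin k) ℂ) (B : Matrix (Fin k) (Fin l) ℂ) :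
    fnorm (A * B) ≤ opNorm A * fnorm B := by
  refine le_of_sq_le_sq ?_ (mul_nonneg (opNorm_nonneg A) (fnorm_nonneg B))
  rw [mul_pow, fnorm_sq_eq_sum_col, fnorm_sq_eq_sum_col, Finset.mul_sum]
  refine Finset.sum_le_sum fun j _ => ?_
  rw [← mul_pow]
  exact pow_le_pow_left₀ (enorm_nonneg _) (enorm_mulVec_le_opNorm_mul A (col B j)) 2

lemma fnorm_mul_conjTranspose_le (D : Matrix (Fin k) (Fin l) ℂ) (W : Matrix (Fin l) (Fin l) ℂ) :
    fnorm (D * Wᴴ) ≤ opNorm W * fnorm D := by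
  rw [← fnorm_conjTranspose, conjTranspose_mul, conjTranspose_conjTranspose,
    ← fnorm_conjTranspose D]
  exact fnorm_mul_le_opNorm_mul W Dᴴ

lemma fnorm_mul_conjTranspose_vecMulVec_add_smul_le (D : Matrix (Fin k) (Fin l) ℂ)
    (w : Fin l → ℂ) (σ : ℝ) (W : Matrix (Fin l) (Fin l) ℂ) :
    fnorm (D * (vecMulVec w (star w) + (σ : ℂ) • W)ᴴ) ≤
      enorm (D *ᵥ w) * enorm w + |σ| * opNorm W * fnorm D := by
  have hsplit : D * (vecMulVec w (star w) + (σ : ℂ) • W)ᴴ =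
      vecMulVec (D *ᵥ w) (star w) + (σ : ℂ) • (D * Wᴴ) := by
    rw [conjTranspose_add, conjTranspose_smul, conjTranspose_vecMulVec, star_star,
      Matrix.mul_add, mul_vecMulVec, Matrix.mul_smul]
    simp
  calc fnorm (D * (vecMulVec w (star w) + (σ : ℂ) • W)ᴴ)
    _ ≤ fnorm (vecMulVec (D *ᵥ w) (star w)) + fnorm ((σ : ℂ) • (D * Wᴴ)) :=
      hsplit ▸ fnorm_add_le _ _
    _ = enorm (D *ᵥ w) * enorm w + |σ| * fnorm (D * Wᴴ) := by
      rw [fnorm_vecMulVec, enorm_star, fnorm_smul, Complex.norm_real, Real.norm_eq_abs]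
    _ ≤ enorm (D *ᵥ w) * enorm w + |σ| * opNorm W * fnorm D := by
      rw [mul_assoc]
      gcongr
      exact fnorm_mul_conjTranspose_le D W

end Norms

lemma le_mul_sqrt_of_sq_div_le {x c r : ℝ} (hc : 0 ≤ c) (hr : 0 < r) (h : x ^ 2 / r ≤ c ^ 2) :
    x ≤ c * √r := by
  refine le_of_sq_le_sq ?_ (by positivity)
  rwa [mul_pow, Real.sq_sqrt hr.le, ← div_le_iff₀ hr]

section Minimizer

variable {k l : ℕ} {V : Matrix (Fin k) (Fin l) ℂ} {a a' : Fin k → ℂ} {w z : Fin l → ℂ}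

lemma fnorm_sub_vecMulVec_sq (V : Matrix (Fin k) (Fin l) ℂ) (a : Fin k → ℂ) (z : Fin l → ℂ) :
    fnorm (V - vecMulVec a (star z)) ^ 2 =
      fnorm V ^ 2 - 2 * (inner ℂ (toLp 2 a) (toLp 2 (V *ᵥ z))).re + enorm a ^ 2 * enorm z ^ 2 := by
  have hcol (j : Fin l) : enorm (col (V - vecMulVec a (star z)) j) ^ 2 =
      enorm (col V j) ^ 2 - 2 * (z j * inner ℂ (toLp 2 a) (toLp 2 (col V j))).re +
        enorm (col (vecMulVec a (star z)) j) ^ 2 := by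
    have hsub : col (V - vecMulVec a (star z)) j = col V j - col (vecMulVec a (star z)) j := rfl
    rw [hsub]
    simp only [enorm_eq_norm_toLp, toLp_sub, norm_sub_sq (𝕜 := ℂ), col_vecMulVec, toLp_smul]
    rw [inner_re_symm, inner_smul_left]
    simp
  have hmulVec : toLp 2 (V *ᵥ z) = ∑ j, z j • toLp 2 (col V j) := by
    ext i
    simp [mulVec, dotProduct, col, mul_comm]
  rw [← mul_pow, ← enorm_star z, ← fnorm_vecMulVec, hmulVec]
  simp only [fnorm_sq_eq_sum_col, hcol, Finset.sum_add_distrib, Finset.sum_sub_distrib,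
    ← Finset.mul_sum, inner_sum, inner_smul_right, Complex.re_sum]

lemma fnorm_sub_vecMulVec_sq_of_isDirection (ha : IsDirection ℂ (toLp 2 a) (toLp 2 (V *ᵥ z))) :
    fnorm (V - vecMulVec a (star z)) ^ 2 = fnorm V ^ 2 - 2 * enorm (V *ᵥ z) + enorm z ^ 2 := by
  rw [fnorm_sub_vecMulVec_sq, ha.inner_eq_norm, enorm_eq_norm_toLp a, ha.1,
    enorm_eq_norm_toLp (V *ᵥ z)]
  simp

lemma fnorm_sub_vecMulVec_le_of_isDirection (ha : IsDirection ℂ (toLp 2 a) (toLp 2 (V *ᵥ z)))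
    (ha' : enorm a' = 1) :
    fnorm (V - vecMulVec a (star z)) ≤ fnorm (V - vecMulVec a' (star z)) := by
  have hinner : (inner ℂ (toLp 2 a') (toLp 2 (V *ᵥ z))).re ≤ enorm (V *ᵥ z) := by
    simpa [← enorm_eq_norm_toLp, ha'] using
      re_inner_le_norm (𝕜 := ℂ) (toLp 2 a') (toLp 2 (V *ᵥ z))
  refine le_of_sq_le_sq ?_ (fnorm_nonneg _)
  rw [fnorm_sub_vecMulVec_sq_of_isDirection ha, fnorm_sub_vecMulVec_sq, ha']
  linarith

lemma lossM_le (ha : enorm a = 1) : lossM V z ≤ fnorm (V - vecMulVec a (star z)) ^ 2 / l :=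
  csInf_le ⟨0, by rintro _ ⟨b, -, rfl⟩; positivity⟩ ⟨a, ha, rfl⟩

lemma lossM_eq_of_isDirection (ha : IsDirection ℂ (toLp 2 a) (toLp 2 (V *ᵥ z))) :
    lossM V z = fnorm (V - vecMulVec a (star z)) ^ 2 / l := by
  refine IsLeast.csInf_eq ⟨⟨a, (enorm_eq_norm_toLp a).trans ha.1, rfl⟩, ?_⟩
  rintro _ ⟨b, hb, rfl⟩
  have := fnorm_nonneg (V - vecMulVec a (star z))
  gcongr
  exact fnorm_sub_vecMulVec_le_of_isDirection ha hb

lemma lossM_nonneg (V : Matrix (Fin k) (Fin l) ℂ) (z : Fin l → ℂ) : 0 ≤ lossM V z :=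
  Real.sInf_nonneg (by rintro _ ⟨a, -, rfl⟩; positivity)

lemma exists_loss1_eq (z w : Fin l → ℂ) :
    ∃ b : ℂ, ‖b‖ = 1 ∧ loss1 z w = enorm (z - b • w) ^ 2 / l := by
  have hcont : Continuous fun b : ℂ => enorm (z - b • w) ^ 2 / l := by
    simp only [enorm]
    fun_prop
  obtain ⟨b, hb, hmin⟩ :=
    (isCompact_sphere (0 : ℂ) 1).exists_isMinOn ⟨1, by simp⟩ hcont.continuousOn
  refine ⟨b, by simpa using hb, IsLeast.csInf_eq ⟨⟨b, by simpa using hb, rfl⟩, ?_⟩⟩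
  rintro _ ⟨c, hc, rfl⟩
  exact hmin (show c ∈ Metric.sphere (0 : ℂ) 1 by simpa using hc)

lemma enorm_sub_star_smul_comm {b : ℂ} (hb : ‖b‖ = 1) (w z : Fin l → ℂ) :
    enorm (w - star b • z) = enorm (z - b • w) := by
  have hstar : star b * b = 1 := by simp [Complex.conj_mul', hb]
  have hsplit : w - star b • z = (-star b) • (z - b • w) := by
    rw [smul_sub, smul_smul, neg_mul, hstar]
    module
  rw [hsplit, enorm_smul, norm_neg, norm_star, hb, one_mul]


lemma exists_enorm_sub_smul_le_of_loss1_le {ε : ℝ} (hε : 0 ≤ ε) (hl : 0 < l)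
    (h : loss1 z w ≤ ε ^ 2) : ∃ c : ℂ, ‖c‖ = 1 ∧ enorm (w - c • z) ≤ ε * √l := by
  obtain ⟨b, hb, hloss⟩ := exists_loss1_eq z w
  refine ⟨star b, by rw [norm_star, hb], ?_⟩
  rw [enorm_sub_star_smul_comm hb]
  exact le_mul_sqrt_of_sq_div_le hε (by exact_mod_cast hl) (hloss ▸ h)

lemma fnorm_sub_vecMulVec_le_add {c : ℂ} (ha : IsDirection ℂ (toLp 2 a) (toLp 2 (V *ᵥ z)))
    (ha' : enorm a' = 1) (hc : ‖c‖ = 1) :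
    fnorm (V - vecMulVec a (star z)) ≤
      fnorm (V - vecMulVec a' (star w)) + enorm (w - c • z) := by
  have hsplit : V - vecMulVec (star c • a') (star z) =
      (V - vecMulVec a' (star w)) + vecMulVec a' (star (w - c • z)) := by
    rw [star_sub, star_smul, vecMulVec_sub, vecMulVec_smul, smul_vecMulVec]
    abel
  calc fnorm (V - vecMulVec a (star z))
    _ ≤ fnorm (V - vecMulVec (star c • a') (star z)) :=
      fnorm_sub_vecMulVec_le_of_isDirection ha (by rw [enorm_smul, norm_star, hc, ha', one_mul])
    _ ≤ fnorm (V - vecMulVec a' (star w)) + fnorm (vecMulVec a' (star (w - c • z))) :=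
      hsplit ▸ fnorm_add_le _ _
    _ = fnorm (V - vecMulVec a' (star w)) + enorm (w - c • z) := by
      rw [fnorm_vecMulVec, ha', enorm_star, one_mul]

lemma enorm_sub_vecMulVec_mulVec (ha : IsDirection ℂ (toLp 2 a) (toLp 2 (V *ᵥ z)))
    (hV : fnorm V = enorm z) :
    enorm ((V - vecMulVec a (star z)) *ᵥ z) = fnorm (V - vecMulVec a (star z)) ^ 2 / 2 := by
  have hfnorm : fnorm (V - vecMulVec a (star z)) ^ 2 = 2 * (enorm z ^ 2 - enorm (V *ᵥ z)) := by
    rw [fnorm_sub_vecMulVec_sq_of_isDirection ha, hV]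
    ring
  have hnonneg : 0 ≤ enorm z ^ 2 - enorm (V *ᵥ z) := by
    linarith [sq_nonneg (fnorm (V - vecMulVec a (star z)))]
  have hVz : V *ᵥ z = (enorm (V *ᵥ z) : ℂ) • a := by
    simpa [← enorm_eq_norm_toLp] using congrArg ofLp ha.2
  have hzz : star z ⬝ᵥ z = ((enorm z ^ 2 : ℝ) : ℂ) := by
    simp [enorm_sq, dotProduct, Complex.conj_mul']
  have hmulVec : (V - vecMulVec a (star z)) *ᵥ z =
      (-(enorm z ^ 2 - enorm (V *ᵥ z) : ℝ) : ℂ) • a := by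
    rw [sub_mulVec, vecMulVec_mulVec, hzz, op_smul_eq_smul]
    conv_lhs => rw [hVz]
    push_cast
    module
  rw [hmulVec, enorm_smul, norm_neg, Complex.norm_real, Real.norm_of_nonneg hnonneg,
    enorm_eq_norm_toLp a, ha.1, hfnorm]
  ring

lemma enorm_sub_vecMulVec_mulVec_le {c : ℂ} {δ : ℝ}
    (ha : IsDirection ℂ (toLp 2 a) (toLp 2 (V *ᵥ z))) (hV : fnorm V = enorm z)
    (ha' : enorm a' = 1) (hVw : fnorm (V - vecMulVec a' (star w)) ≤ δ)
    (hc : ‖c‖ = 1) (hwz : enorm (w - c • z) ≤ δ) :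
    enorm ((V - vecMulVec a (star z)) *ᵥ w) ≤ 2 * δ * fnorm (V - vecMulVec a (star z)) := by
  have hresidual := (fnorm_sub_vecMulVec_le_add ha ha' hc).trans (add_le_add hVw hwz)
  have hDz := enorm_sub_vecMulVec_mulVec ha hV
  set D := V - vecMulVec a (star z)
  have hD := fnorm_nonneg D
  calc enorm (D *ᵥ w) = enorm (D *ᵥ (w - c • z) + c • (D *ᵥ z)) := by
        rw [← mulVec_smul, ← mulVec_add, sub_add_cancel]
    _ ≤ enorm (D *ᵥ (w - c • z)) + enorm (c • (D *ᵥ z)) := enorm_add_le _ _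
    _ ≤ fnorm D * enorm (w - c • z) + fnorm D ^ 2 / 2 := by
      rw [enorm_smul, hc, one_mul, hDz]
      gcongr
      exact enorm_mulVec_le_fnorm_mul _ _
    _ ≤ fnorm D * δ + fnorm D * (δ + δ) / 2 := by
      rw [sq]
      gcongr
    _ = 2 * δ * fnorm D := by ring

lemma fnorm_sub_vecMulVec_mul_conjTranspose_le {c : ℂ} {δ : ℝ}
    (ha : IsDirection ℂ (toLp 2 a) (toLp 2 (V *ᵥ z))) (hV : fnorm V = enorm z)
    (ha' : enorm a' = 1) (hVw : fnorm (V - vecMulVec a' (star w)) ≤ δ)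
    (hc : ‖c‖ = 1) (hwz : enorm (w - c • z) ≤ δ) (σ : ℝ) (W : Matrix (Fin l) (Fin l) ℂ) :
    fnorm ((V - vecMulVec a (star z)) * (vecMulVec w (star w) + (σ : ℂ) • W)ᴴ) ≤
      (2 * δ * enorm w + |σ| * opNorm W) * fnorm (V - vecMulVec a (star z)) := by
  have hDw := enorm_sub_vecMulVec_mulVec_le ha hV ha' hVw hc hwz
  set D := V - vecMulVec a (star z)
  calc fnorm (D * (vecMulVec w (star w) + (σ : ℂ) • W)ᴴ)
    _ ≤ enorm (D *ᵥ w) * enorm w + |σ| * opNorm W * fnorm D :=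
      fnorm_mul_conjTranspose_vecMulVec_add_smul_le D w σ W
    _ ≤ 2 * δ * fnorm D * enorm w + |σ| * opNorm W * fnorm D := by
      gcongr
      exact enorm_nonneg w
    _ = (2 * δ * enorm w + |σ| * opNorm W) * fnorm D := by ring

end Minimizer

section Iteration

variable {k l : ℕ} {V : Matrix (Fin k) (Fin l) ℂ} {a : Fin k → ℂ} {z : Fin l → ℂ}

lemma isDirection_F1 (Y : Matrix (Fin l) (Fin l) ℂ) {j : Fin l} (hz : ‖z j‖ = 1) :
    IsDirection ℂ (F1 Y z j) ((Y *ᵥ z) j) := by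
  by_cases h : (Y *ᵥ z) j = 0
  · rw [F1, if_neg (not_not.2 h), h]
    exact isDirection_zero hz
  · rw [F1, if_pos h, div_eq_inv_mul]
    exact isDirection_inv_norm_smul h

lemma isDirection_col_Fm (Y : Matrix (Fin l) (Fin l) ℂ) {j : Fin l} (hV : enorm (col V j) = 1) :
    IsDirection ℂ (toLp 2 (col (Fm Y V) j)) (toLp 2 (col (V * Yᴴ) j)) := by
  by_cases h : col (V * Yᴴ) j = 0
  · have hcol : col (Fm Y V) j = col V j := by
      ext i
      exact if_neg (not_not.2 h)
    rw [hcol, h]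
    exact isDirection_zero ((enorm_eq_norm_toLp _).symm.trans hV)
  · have hcol : col (Fm Y V) j = (enorm (col (V * Yᴴ) j) : ℂ)⁻¹ • col (V * Yᴴ) j := by
      ext i
      exact (if_pos h).trans (div_eq_inv_mul _ _)
    rw [hcol, toLp_smul, enorm_eq_norm_toLp]
    exact isDirection_inv_norm_smul (by simpa using h)

lemma lossM_Fm_F1_le (Y : Matrix (Fin l) (Fin l) ℂ) (hV : ∀ j, enorm (col V j) = 1)
    (hz : ∀ j, ‖z j‖ = 1) (ha : enorm a = 1) {t : ℝ} (ht : 0 < t) :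
    lossM (Fm Y V) (F1 Y z) ≤
      (4 / t ^ 2 * fnorm ((V - vecMulVec a (star z)) * Yᴴ) ^ 2 +
        4 * ∑ j, ind (‖(Y *ᵥ z) j‖ < t)) / l := by
  have hmul : (V - vecMulVec a (star z)) * Yᴴ = V * Yᴴ - vecMulVec a (star (Y *ᵥ z)) := by
    rw [Matrix.sub_mul, vecMulVec_mul, star_mulVec]
  have hcol_sub (A : Matrix (Fin k) (Fin l) ℂ) (y : Fin l → ℂ) (j : Fin l) :
      toLp 2 (col (A - vecMulVec a (star y)) j) = toLp 2 (col A j) - star (y j) • toLp 2 a := by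
    rw [← toLp_smul, ← toLp_sub, ← Pi.star_apply, ← col_vecMulVec]
    rfl
  have ha' : ‖toLp 2 a‖ = 1 := (enorm_eq_norm_toLp a).symm.trans ha
  refine (lossM_le ha).trans ?_
  gcongr
  rw [hmul, fnorm_sq_eq_sum_col, fnorm_sq_eq_sum_col, Finset.mul_sum, Finset.mul_sum,
    ← Finset.sum_add_distrib]
  refine Finset.sum_le_sum fun j _ => ?_
  have hstep := (isDirection_col_Fm Y (hV j)).sq_norm_sub_le ht
    ((isDirection_F1 Y (hz j)).star_smul ha')
  rwa [norm_smul, norm_star, ha', mul_one, ← hcol_sub, ← hcol_sub, ← enorm_eq_norm_toLp,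
    ← enorm_eq_norm_toLp] at hstep

end Iteration

theorem stmt0_general {n m : ℕ} (hn : 1 ≤ n)
    (zstar : Fin n → ℂ) (hzstar : ∀ j, ‖zstar j‖ = 1)
    (σ : ℝ) (W : Matrix (Fin n) (Fin n) ℂ) (Y : Matrix (Fin n) (Fin n) ℂ)
    (hY : Y = vecMulVec zstar (star zstar) + (σ : ℂ) • W) (ε : ℝ) (hε : 0 ≤ ε)
    (z : Fin n → ℂ) (hz1 : ∀ j, ‖z j‖ = 1) (hz2 : loss1 z zstar ≤ ε ^ 2)
    (V : Matrix (Fin m) (Fin n) ℂ) (hV1 : ∀ j, enorm (col V j) = 1)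
    (hV2 : lossM V zstar ≤ ε ^ 2) (t : ℝ) (ht : 0 < t) :
    lossM (Fm Y V) (F1 Y z) ≤
      (4 * (n : ℝ) ^ 2 / t ^ 2) * (2 * ε + |σ| * opNorm W / n) ^ 2 * lossM V z +
        (4 / (n : ℝ)) * ∑ j : Fin n, ind (‖(Y *ᵥ z) j‖ < t) := by
  have hn0 : (0 : ℝ) < n := by exact_mod_cast hn
  have hunit : ‖toLp 2 (col V ⟨0, hn⟩)‖ = 1 := (enorm_eq_norm_toLp _).symm.trans (hV1 _)
  obtain ⟨⟨a⟩, ha⟩ := exists_isDirection (𝕜 := ℂ) hunit (toLp 2 (V *ᵥ z))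
  obtain ⟨⟨a'⟩, ha'⟩ := exists_isDirection (𝕜 := ℂ) hunit (toLp 2 (V *ᵥ zstar))
  obtain ⟨c, hc, hcz⟩ := exists_enorm_sub_smul_le_of_loss1_le hε hn hz2
  have hVz : fnorm V = enorm z := by
    rw [fnorm_eq_sqrt_of_enorm_col_eq_one hV1, enorm_eq_sqrt_of_norm_eq_one hz1]
  have hVzstar : fnorm (V - vecMulVec a' (star zstar)) ≤ ε * √n :=
    le_mul_sqrt_of_sq_div_le hε hn0 (lossM_eq_of_isDirection ha' ▸ hV2)
  have hDY := fnorm_sub_vecMulVec_mul_conjTranspose_le ha hVz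
    ((enorm_eq_norm_toLp a').trans ha'.1) hVzstar hc hcz σ W
  rw [← hY, enorm_eq_sqrt_of_norm_eq_one hzstar] at hDY
  have hrate : 2 * (ε * √n) * √n + |σ| * opNorm W = n * (2 * ε + |σ| * opNorm W / n) := by
    rw [mul_assoc, mul_assoc, Real.mul_self_sqrt hn0.le]
    field_simp
  calc lossM (Fm Y V) (F1 Y z)
    _ ≤ (4 / t ^ 2 * fnorm ((V - vecMulVec a (star z)) * Yᴴ) ^ 2 +
          4 * ∑ j, ind (‖(Y *ᵥ z) j‖ < t)) / n :=
      lossM_Fm_F1_le Y hV1 hz1 ((enorm_eq_norm_toLp a).trans ha.1) ht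
    _ ≤ (4 / t ^ 2 * (n * (2 * ε + |σ| * opNorm W / n) * fnorm (V - vecMulVec a (star z))) ^ 2 +
          4 * ∑ j, ind (‖(Y *ᵥ z) j‖ < t)) / n := by
      have := fnorm_nonneg ((V - vecMulVec a (star z)) * Yᴴ)
      gcongr
      exact hrate ▸ hDY
    _ = _ := by
      rw [lossM_eq_of_isDirection ha]
      ring

theorem stmt0 {n m : ℕ} (hn : 1 ≤ n) (hm : 2 ≤ m)
    (zstar : Fin n → ℂ) (hzstar : ∀ j, ‖zstar j‖ = 1)
    (σ : ℝ) (hσ : 0 < σ) (W : Matrix (Fin n) (Fin n) ℂ) (hW : W.IsHermitian)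
    (Y : Matrix (Fin n) (Fin n) ℂ)
    (hY : Y = Matrix.vecMulVec zstar (star zstar) + (σ : ℂ) • W)
    (ε : ℝ) (hε : 0 < ε ∧ ε < 1 / 2)
    (z : Fin n → ℂ) (hz1 : ∀ j, ‖z j‖ = 1) (hz2 : loss1 z zstar ≤ ε ^ 2)
    (V : Matrix (Fin m) (Fin n) ℂ) (hV1 : ∀ j, enorm (col V j) = 1)
    (hV2 : lossM V zstar ≤ ε ^ 2)
    (t : ℝ) (ht : 0 < t) :
    lossM (Fm Y V) (F1 Y z) ≤
      (4 * (n : ℝ) ^ 2 / t ^ 2) * (6 * ε + σ * opNorm W / n) ^ 2 * lossM V z +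
        (4 / (n : ℝ)) * ∑ j : Fin n, ind (‖Y.mulVec z j‖ < t) := by
  refine (stmt0_general hn zstar hzstar σ W Y hY ε hε.1.le z hz1 hz2 V hV1 hV2 t ht).trans ?_
  have := hε.1
  have := lossM_nonneg V z
  have := opNorm_nonneg W
  rw [abs_of_pos hσ]
  gcongr
  norm_num

end PhaseSync
end
end

section
/- If ẑ ∈ ℂ_1^n maximizes the (real-valued, since Y is Hermitian) objective Re⟨Y, zzᴴ⟩ over all z ∈ ℂ_1^n, then ℓ_1(ẑ, z*) ≤ 8σ‖W‖/n. -/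
open scoped Classical
open Matrix

noncomputable section

namespace PhaseSync

/-!
The objective at `z` is `|⟪z*, z⟫|² + σ Re ⟪W z, z⟫`. Comparing its values at `ẑ` and `z*`, which
have the same norm `r`, gives `r⁴ - |⟪z*, ẑ⟫|² ≤ 2 σ ‖W‖ r²`, hence `r² - |⟪z*, ẑ⟫| ≤ 2 σ ‖W‖`.
After rotating `z*` by the phase `a` of `⟪z*, ẑ⟫`, the squared distance `‖ẑ - a z*‖²` is exactly
`2 (r² - |⟪z*, ẑ⟫|)`.
-/

lemma sub_le_of_sq_sub_sq_le_mul {R : Type*} [CommRing R] [LinearOrder R] [IsStrictOrderedRing R]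
    {r t c : R} (ht : 0 ≤ t) (hc : 0 ≤ c) (h : r ^ 2 - t ^ 2 ≤ c * r) : r - t ≤ c := by
  by_contra! hlt
  have hr : 0 < r := by linarith
  have : c * r < r ^ 2 - t ^ 2 :=
    calc c * r < (r - t) * r := by gcongr
      _ ≤ (r - t) * (r + t) := by gcongr <;> linarith
      _ = r ^ 2 - t ^ 2 := by ring
  linarith

section InnerProductSpace

open ContinuousLinearMap InnerProductSpace RCLike

variable {𝕜 E : Type*} [RCLike 𝕜] [SeminormedAddCommGroup E] [InnerProductSpace 𝕜 E]

lemma abs_reApplyInnerSelf_le (T : E →L[𝕜] E) (x : E) :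
    |T.reApplyInnerSelf x| ≤ ‖T‖ * ‖x‖ ^ 2 :=
  calc |T.reApplyInnerSelf x| ≤ ‖inner 𝕜 (T x) x‖ := abs_re_le_norm _
    _ ≤ ‖T x‖ * ‖x‖ := norm_inner_le_norm _ _
    _ ≤ ‖T‖ * ‖x‖ * ‖x‖ := by gcongr; exact T.le_opNorm x
    _ = ‖T‖ * ‖x‖ ^ 2 := by ring

lemma reApplyInnerSelf_rankOne_self_add (u x : E) (T : E →L[𝕜] E) :
    (rankOne 𝕜 u u + T).reApplyInnerSelf x = ‖inner 𝕜 u x‖ ^ 2 + T.reApplyInnerSelf x := by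
  rw [reApplyInnerSelf_apply, _root_.add_apply, inner_add_left, map_add, inner_left_rankOne_apply,
    inner_mul_symm_re_eq_norm, norm_mul, norm_inner_symm, ← sq, ← reApplyInnerSelf_apply]

lemma exists_norm_sub_smul_sq_eq (u v : E) :
    ∃ a : 𝕜, ‖a‖ = 1 ∧ ‖v - a • u‖ ^ 2 = ‖v‖ ^ 2 + ‖u‖ ^ 2 - 2 * ‖inner 𝕜 u v‖ := by
  obtain ⟨a, ha, hphase⟩ := exists_norm_eq_mul_self (inner 𝕜 v u)
  refine ⟨a, ha, ?_⟩
  rw [norm_sub_sq (𝕜 := 𝕜), inner_smul_right, ← hphase, ofReal_re, norm_smul, ha, one_mul,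
    norm_inner_symm]
  ring

variable {u v : E} {T : E →L[𝕜] E}

lemma norm_sq_sub_norm_inner_le_of_reApplyInnerSelf_le (hnorm : ‖v‖ = ‖u‖)
    (hle : (rankOne 𝕜 u u + T).reApplyInnerSelf u ≤ (rankOne 𝕜 u u + T).reApplyInnerSelf v) :
    ‖u‖ ^ 2 - ‖inner 𝕜 u v‖ ≤ 2 * ‖T‖ := by
  apply sub_le_of_sq_sub_sq_le_mul (norm_nonneg _) (by positivity)
  have hu : -(‖T‖ * ‖u‖ ^ 2) ≤ T.reApplyInnerSelf u :=
    neg_le_of_abs_le (abs_reApplyInnerSelf_le T u)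
  have hv : T.reApplyInnerSelf v ≤ ‖T‖ * ‖u‖ ^ 2 :=
    hnorm ▸ le_of_abs_le (abs_reApplyInnerSelf_le T v)
  have hself : ‖inner 𝕜 u u‖ = ‖u‖ ^ 2 := by
    rw [inner_self_eq_norm_sq_to_K, norm_pow, norm_ofReal, abs_norm]
  rw [reApplyInnerSelf_rankOne_self_add, reApplyInnerSelf_rankOne_self_add, hself] at hle
  linarith

theorem exists_norm_sub_smul_sq_le_of_reApplyInnerSelf_le (hnorm : ‖v‖ = ‖u‖)
    (hle : (rankOne 𝕜 u u + T).reApplyInnerSelf u ≤ (rankOne 𝕜 u u + T).reApplyInnerSelf v) :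
    ∃ a : 𝕜, ‖a‖ = 1 ∧ ‖v - a • u‖ ^ 2 ≤ 4 * ‖T‖ := by
  obtain ⟨a, ha, hdist⟩ := exists_norm_sub_smul_sq_eq (𝕜 := 𝕜) u v
  refine ⟨a, ha, ?_⟩
  have := norm_sq_sub_norm_inner_le_of_reApplyInnerSelf_le hnorm hle
  rw [hdist, hnorm]
  linarith

end InnerProductSpace

section Euclidean

lemma toEuclideanCLM_vecMulVec_star {𝕜 ι : Type*} [RCLike 𝕜] [Fintype ι] [DecidableEq ι]
    (x y : ι → 𝕜) :
    toEuclideanCLM (𝕜 := 𝕜) (vecMulVec x (star y)) =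
      InnerProductSpace.rankOne 𝕜 (WithLp.toLp 2 x) (WithLp.toLp 2 y) := by
  ext z i
  simp [vecMulVec_mulVec, EuclideanSpace.inner_eq_star_dotProduct, dotProduct_comm, mul_comm]

lemma re_trace_conjTranspose_mul_vecMulVec_star {𝕜 ι : Type*} [RCLike 𝕜] [Fintype ι]
    [DecidableEq ι] (A : Matrix ι ι 𝕜) (x : ι → 𝕜) :
    RCLike.re (trace (Aᴴ * vecMulVec x (star x))) =
      (toEuclideanCLM (𝕜 := 𝕜) A).reApplyInnerSelf (WithLp.toLp 2 x) := by
  rw [mul_vecMulVec, trace_vecMulVec, ContinuousLinearMap.reApplyInnerSelf_apply,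
    toEuclideanCLM_toLp, EuclideanSpace.inner_toLp_toLp, star_mulVec, dotProduct_comm,
    dotProduct_mulVec, dotProduct_comm]

variable {n : ℕ}

lemma enorm_eq_norm_toLp_s11 (x : Fin n → ℂ) : enorm x = ‖WithLp.toLp 2 x‖ :=
  (EuclideanSpace.norm_eq _).symm

lemma enorm_of_norm_eq_one {z : Fin n → ℂ} (hz : ∀ j, ‖z j‖ = 1) : enorm z = √n := by
  simp [enorm, hz]

lemma loss1_mul_natCast_le (x z : Fin n → ℂ) {a : ℂ} (ha : ‖a‖ = 1) :
    loss1 x z * n ≤ enorm (x - a • z) ^ 2 := by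
  refine mul_le_of_le_div₀ (by positivity) (by positivity) (csInf_le ⟨0, ?_⟩ ⟨a, ha, rfl⟩)
  rintro _ ⟨b, -, rfl⟩
  positivity

end Euclidean

theorem stmt11_general {n : ℕ} (hn : 1 ≤ n) (zstar zhat : Fin n → ℂ)
    (hnorm : enorm zhat = enorm zstar) (σ : ℝ) (W Y : Matrix (Fin n) (Fin n) ℂ)
    (hY : Y = vecMulVec zstar (star zstar) + (σ : ℂ) • W)
    (hle : (trace (Yᴴ * vecMulVec zstar (star zstar))).re ≤
      (trace (Yᴴ * vecMulVec zhat (star zhat))).re) :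
    loss1 zhat zstar ≤ 4 * |σ| * opNorm W / n := by
  have hYop : toEuclideanCLM (𝕜 := ℂ) Y =
      InnerProductSpace.rankOne ℂ (WithLp.toLp 2 zstar) (WithLp.toLp 2 zstar) +
        (σ : ℂ) • toEuclideanCLM (𝕜 := ℂ) W := by
    rw [hY, map_add, map_smul, toEuclideanCLM_vecMulVec_star]
  simp only [← RCLike.re_eq_complex_re, re_trace_conjTranspose_mul_vecMulVec_star, hYop] at hle
  rw [enorm_eq_norm_toLp_s11, enorm_eq_norm_toLp_s11] at hnorm
  obtain ⟨a, ha, hdist⟩ := exists_norm_sub_smul_sq_le_of_reApplyInnerSelf_le hnorm hle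
  rw [le_div_iff₀ (by exact_mod_cast hn)]
  calc loss1 zhat zstar * n ≤ enorm (zhat - a • zstar) ^ 2 := loss1_mul_natCast_le _ _ ha
    _ ≤ 4 * ‖(σ : ℂ) • toEuclideanCLM (𝕜 := ℂ) W‖ := by
      rwa [enorm_eq_norm_toLp_s11, WithLp.toLp_sub, WithLp.toLp_smul]
    _ = 4 * |σ| * opNorm W := by
      rw [norm_smul, Complex.norm_real, Real.norm_eq_abs, opNorm, mul_assoc]

theorem stmt11 {n : ℕ} (hn : 1 ≤ n)
    (zstar : Fin n → ℂ) (hzstar : ∀ j, ‖zstar j‖ = 1)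
    (σ : ℝ) (hσ : 0 < σ) (W : Matrix (Fin n) (Fin n) ℂ) (hW : W.IsHermitian)
    (Y : Matrix (Fin n) (Fin n) ℂ)
    (hY : Y = Matrix.vecMulVec zstar (star zstar) + (σ : ℂ) • W)
    (zhat : Fin n → ℂ) (hzhat : ∀ j, ‖zhat j‖ = 1)
    (hmax : ∀ z : Fin n → ℂ, (∀ j, ‖z j‖ = 1) →
      (Matrix.trace (Yᴴ * Matrix.vecMulVec z (star z))).re ≤
        (Matrix.trace (Yᴴ * Matrix.vecMulVec zhat (star zhat))).re) :
    loss1 zhat zstar ≤ 8 * σ * opNorm W / n := by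
  have hnorm : enorm zhat = enorm zstar := by
    rw [enorm_of_norm_eq_one hzhat, enorm_of_norm_eq_one hzstar]
  refine (stmt11_general hn zstar zhat hnorm σ W Y hY (hmax zstar hzstar)).trans ?_
  rw [abs_of_pos hσ]
  gcongr
  · exact norm_nonneg _
  · norm_num

end PhaseSync
end
end

section
/- For any s ∈ ℂ and any real t > 0 with t ≥ 2σ‖W‖, the map G(·, s, t) has exactly one fixed point in ℂ_{≤1}^n: there exists one and only one z ∈ ℂ_{≤1}^n with z = G(z, s, t). Moreover, this fixed point is the limit of the iterates z^{(0)} = z*, z^{(T)} = G(z^{(T−1)}, s, t) for T ∈ ℕ: z = lim_{T→∞} z^{(T)}. -/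
open scoped Classical
open Matrix

noncomputable section

namespace PhaseSync

/-!
Up to the factor `t⁻¹`, the map `g_t` is the metric projection of `ℂ` onto the closed disc of
radius `t`. Metric projections onto convex sets are nonexpansive, by their variational inequality,
so `g_t` is `t⁻¹`-Lipschitz, and `G(·, s, t)` is Lipschitz with constant `|σ| ‖W‖ / t` for the
Euclidean norm. As soon as `|σ| ‖W‖ < t`, Banach's fixed point theorem applies on all of `ℂ^n`, and
the fixed point has entries in the unit disc because `g_t` takes its values there.
-/

section BallProjection

open scoped RealInnerProductSpace

variable {E : Type*} [NormedAddCommGroup E] [InnerProductSpace ℝ E]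

lemma norm_sub_le_of_inner_nonneg {x y p q : E} (hp : 0 ≤ ⟪x - p, p - q⟫)
    (hq : 0 ≤ ⟪y - q, q - p⟫) : ‖p - q‖ ≤ ‖x - y‖ := by
  have inner_decomp : ⟪x - y, p - q⟫ = ⟪x - p, p - q⟫ + ⟪y - q, q - p⟫ + ‖p - q‖ ^ 2 := by
    rw [← real_inner_self_eq_norm_sq, ← neg_sub p q, inner_neg_right, ← sub_eq_add_neg,
      ← inner_sub_left, ← inner_add_left]
    congr 1
    abel
  have sq_le : ‖p - q‖ * ‖p - q‖ ≤ ‖x - y‖ * ‖p - q‖ := by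
    linarith [real_inner_le_norm (x - y) (p - q)]
  rcases (norm_nonneg (p - q)).eq_or_lt with norm_zero | norm_pos
  · exact norm_zero ▸ norm_nonneg (x - y)
  · exact le_of_mul_le_mul_right sq_le norm_pos

/-- The metric projection onto the closed ball of radius `t ≥ 0` centred at the origin, as an
explicit formula. At `t = 0`, `x = 0` the quotient is `0 / 0 = 0`, which gives the right value. -/
def ballProj (t : ℝ) (x : E) : E := (t / max ‖x‖ t) • x

lemma ballProj_of_norm_le {t : ℝ} {x : E} (hx : ‖x‖ ≤ t) : ballProj t x = x := by
  rcases eq_or_ne t 0 with rfl | t_ne_zero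
  · rw [norm_le_zero_iff.mp hx, ballProj, smul_zero]
  · rw [ballProj, max_eq_right hx, div_self t_ne_zero, one_smul]

lemma ballProj_of_le_norm {t : ℝ} {x : E} (hx : t ≤ ‖x‖) : ballProj t x = (t / ‖x‖) • x := by
  rw [ballProj, max_eq_left hx]

lemma norm_ballProj_le {t : ℝ} (ht : 0 ≤ t) (x : E) : ‖ballProj t x‖ ≤ t := by
  rcases le_total ‖x‖ t with hx | hx
  · rwa [ballProj_of_norm_le hx]
  · rw [ballProj_of_le_norm hx, norm_smul, Real.norm_of_nonneg (by positivity)]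
    exact (div_mul_cancel_of_imp fun norm_zero => le_antisymm (norm_zero ▸ hx) ht).le

lemma inner_sub_ballProj_nonneg {t : ℝ} (x : E) {q : E} (hq : ‖q‖ ≤ t) :
    0 ≤ ⟪x - ballProj t x, ballProj t x - q⟫ := by
  rcases le_or_gt ‖x‖ t with hx | hx
  · rw [ballProj_of_norm_le hx, sub_self, inner_zero_left]
  · have norm_pos : 0 < ‖x‖ := ((norm_nonneg q).trans hq).trans_lt hx
    have residual : x - (t / ‖x‖) • x = (1 - t / ‖x‖) • x := by rw [sub_smul, one_smul]
    have inner_proj : ⟪x, (t / ‖x‖) • x⟫ = ‖x‖ * t := by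
      rw [real_inner_smul_right, real_inner_self_eq_norm_sq]
      field_simp
    have inner_le : ⟪x, q⟫ ≤ ‖x‖ * t :=
      (real_inner_le_norm x q).trans (mul_le_mul_of_nonneg_left hq norm_pos.le)
    rw [ballProj_of_le_norm hx.le, residual, real_inner_smul_left, inner_sub_right, inner_proj]
    exact mul_nonneg (sub_nonneg.mpr ((div_le_one norm_pos).mpr hx.le)) (sub_nonneg.mpr inner_le)

lemma norm_ballProj_sub_ballProj_le {t : ℝ} (ht : 0 ≤ t) (x y : E) :
    ‖ballProj t x - ballProj t y‖ ≤ ‖x - y‖ :=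
  norm_sub_le_of_inner_nonneg (inner_sub_ballProj_nonneg x (norm_ballProj_le ht y))
    (inner_sub_ballProj_nonneg y (norm_ballProj_le ht x))

end BallProjection

lemma norm_gfun_le_one (t : ℝ) (x : ℂ) : ‖gfun t x‖ ≤ 1 := by
  rw [gfun, norm_div, Complex.norm_real]
  exact div_le_one_of_le₀ ((le_max_left _ _).trans (Real.le_norm_self _)) (norm_nonneg _)

lemma gfun_eq_inv_smul_ballProj {t : ℝ} (ht : t ≠ 0) (x : ℂ) : gfun t x = t⁻¹ • ballProj t x := by
  rw [ballProj, smul_smul, ← mul_div_assoc, inv_mul_cancel₀ ht, one_div, Complex.real_smul,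
    Complex.ofReal_inv, gfun, div_eq_inv_mul]

lemma norm_gfun_sub_gfun_le {t : ℝ} (ht : 0 < t) (x y : ℂ) :
    ‖gfun t x - gfun t y‖ ≤ t⁻¹ * ‖x - y‖ := by
  rw [gfun_eq_inv_smul_ballProj ht.ne', gfun_eq_inv_smul_ballProj ht.ne', ← smul_sub, norm_smul,
    Real.norm_of_nonneg (inv_nonneg.mpr ht.le)]
  gcongr
  exact norm_ballProj_sub_ballProj_le ht.le x y

lemma norm_le_mul_norm_of_forall_apply_le {ι : Type*} [Fintype ι] {α β : ι → Type*}
    [∀ i, SeminormedAddCommGroup (α i)] [∀ i, SeminormedAddCommGroup (β i)] {v : PiLp 2 α}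
    {w : PiLp 2 β} {c : ℝ} (hc : 0 ≤ c) (h : ∀ i, ‖v i‖ ≤ c * ‖w i‖) : ‖v‖ ≤ c * ‖w‖ := by
  refine le_of_sq_le_sq ?_ (by positivity)
  rw [mul_pow, PiLp.norm_sq_eq_of_L2, PiLp.norm_sq_eq_of_L2, Finset.mul_sum]
  gcongr with i
  rw [← mul_pow]
  gcongr
  exact h i

lemma tendsto_fixedPoint_of_forall_succ_eq {X : Type*} [MetricSpace X] [CompleteSpace X]
    [Nonempty X] {K : NNReal} {f : X → X} (hf : ContractingWith K f) {u : ℕ → X}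
    (hu : ∀ T, u (T + 1) = f (u T)) :
    Filter.Tendsto u Filter.atTop (nhds (hf.fixedPoint f)) := by
  have eq_iterate : u = fun T => f^[T] (u 0) := by
    funext T
    induction T with
    | zero => rfl
    | succ T ih => rw [hu, ih, Function.iterate_succ_apply']
  rw [eq_iterate]
  exact hf.tendsto_iterate_fixedPoint (u 0)

section Contraction

variable {n : ℕ} (zstar : Fin n → ℂ) (σ : ℝ) (W : Matrix (Fin n) (Fin n) ℂ) (s : ℂ) {t : ℝ}

/-- The map `G(·, s, t)` on `EuclideanSpace ℂ (Fin n)`, so that distances are measured in the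
Euclidean norm rather than the sup norm of `Fin n → ℂ`. -/
def euclideanG (t : ℝ) (z : EuclideanSpace ℂ (Fin n)) : EuclideanSpace ℂ (Fin n) :=
  WithLp.toLp 2 (G zstar σ W z.ofLp s t)

lemma norm_euclideanG_sub_apply_le (ht : 0 < t) (z w : EuclideanSpace ℂ (Fin n)) (j : Fin n) :
    ‖(euclideanG zstar σ W s t z - euclideanG zstar σ W s t w) j‖ ≤
      t⁻¹ * |σ| * ‖Matrix.toEuclideanCLM (𝕜 := ℂ) (n := Fin n) W (z - w) j‖ := by
  have argument_sub : (zstar j * s + σ * W.mulVec z.ofLp j) - (zstar j * s + σ * W.mulVec w.ofLp j)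
      = σ * Matrix.toEuclideanCLM (𝕜 := ℂ) (n := Fin n) W (z - w) j := by
    rw [add_sub_add_left_eq_sub, ← mul_sub, Matrix.ofLp_toEuclideanCLM, WithLp.ofLp_sub,
      Matrix.mulVec_sub, Pi.sub_apply]
  have lipschitz_bound := norm_gfun_sub_gfun_le ht (zstar j * s + σ * W.mulVec z.ofLp j)
    (zstar j * s + σ * W.mulVec w.ofLp j)
  rwa [argument_sub, norm_mul, Complex.norm_real, Real.norm_eq_abs, ← mul_assoc] at lipschitz_bound

lemma norm_euclideanG_sub_le (ht : 0 < t) (z w : EuclideanSpace ℂ (Fin n)) :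
    ‖euclideanG zstar σ W s t z - euclideanG zstar σ W s t w‖ ≤
      |σ| * opNorm W / t * ‖z - w‖ := by
  calc ‖euclideanG zstar σ W s t z - euclideanG zstar σ W s t w‖
      ≤ t⁻¹ * |σ| * ‖Matrix.toEuclideanCLM (𝕜 := ℂ) (n := Fin n) W (z - w)‖ :=
        norm_le_mul_norm_of_forall_apply_le (by positivity)
          (norm_euclideanG_sub_apply_le zstar σ W s ht z w)
    _ ≤ t⁻¹ * |σ| * (opNorm W * ‖z - w‖) := by
        gcongr
        exact ContinuousLinearMap.le_opNorm _ _
    _ = |σ| * opNorm W / t * ‖z - w‖ := by ring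

lemma contractingWith_euclideanG (h : |σ| * opNorm W < t) :
    ContractingWith (|σ| * opNorm W / t).toNNReal (euclideanG zstar σ W s t) := by
  have const_nonneg : 0 ≤ |σ| * opNorm W := mul_nonneg (abs_nonneg σ) (norm_nonneg _)
  have t_pos : 0 < t := const_nonneg.trans_lt h
  refine ⟨Real.toNNReal_lt_one.mpr ((div_lt_one t_pos).mpr h),
    LipschitzWith.of_dist_le_mul fun z w => ?_⟩
  rw [dist_eq_norm, dist_eq_norm, Real.coe_toNNReal _ (div_nonneg const_nonneg t_pos.le)]
  exact norm_euclideanG_sub_le zstar σ W s t_pos z w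

end Contraction

theorem stmt14_general {n : ℕ} (zstar : Fin n → ℂ) (σ : ℝ) (W : Matrix (Fin n) (Fin n) ℂ)
    (s : ℂ) (t : ℝ) (h : |σ| * opNorm W < t) :
    ∃ z : Fin n → ℂ, (∀ j, ‖z j‖ ≤ 1) ∧ z = G zstar σ W z s t ∧
      (∀ z' : Fin n → ℂ, z' = G zstar σ W z' s t → z' = z) ∧
      ∀ zseq : ℕ → Fin n → ℂ, (∀ T, zseq (T + 1) = G zstar σ W (zseq T) s t) →
        Filter.Tendsto zseq Filter.atTop (nhds z) := by
  have contracting := contractingWith_euclideanG zstar σ W s h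
  set z := contracting.fixedPoint
  have z_fixed : z.ofLp = G zstar σ W z.ofLp s t :=
    congrArg WithLp.ofLp contracting.fixedPoint_isFixedPt.symm
  refine ⟨z.ofLp, fun j => ?_, z_fixed, fun z' z'_fixed => ?_, fun zseq zseq_succ => ?_⟩
  · rw [z_fixed]
    exact norm_gfun_le_one t _
  · have toLp_fixed : Function.IsFixedPt (euclideanG zstar σ W s t) (WithLp.toLp 2 z') :=
      congrArg (WithLp.toLp 2) z'_fixed.symm
    exact congrArg WithLp.ofLp (contracting.fixedPoint_unique toLp_fixed)
  · have toLp_tendsto : Filter.Tendsto (fun T => WithLp.toLp 2 (zseq T)) Filter.atTop (nhds z) :=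
      tendsto_fixedPoint_of_forall_succ_eq contracting fun T =>
        congrArg (WithLp.toLp 2) (zseq_succ T)
    exact ((PiLp.continuous_ofLp 2 _).tendsto z).comp toLp_tendsto

theorem stmt14 {n : ℕ} (hn : 1 ≤ n)
    (zstar : Fin n → ℂ) (hzstar : ∀ j, ‖zstar j‖ = 1)
    (σ : ℝ) (hσ : 0 < σ) (W : Matrix (Fin n) (Fin n) ℂ) (hW : W.IsHermitian)
    (s : ℂ) (t : ℝ) (ht : 0 < t) (ht2 : 2 * σ * opNorm W ≤ t)
    (zseq : ℕ → Fin n → ℂ) (hz0 : zseq 0 = zstar)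
    (hzT : ∀ T : ℕ, zseq (T + 1) = G zstar σ W (zseq T) s t) :
    ∃ z : Fin n → ℂ,
      ((∀ j, ‖z j‖ ≤ 1) ∧ z = G zstar σ W z s t) ∧
      (∀ z' : Fin n → ℂ, ((∀ j, ‖z' j‖ ≤ 1) ∧ z' = G zstar σ W z' s t) → z' = z) ∧
      Filter.Tendsto zseq Filter.atTop (nhds z) := by
  have lipschitz_const_lt : |σ| * opNorm W < t := by rw [abs_of_pos hσ]; linarith
  obtain ⟨z, z_le_one, z_fixed, z_unique, z_limit⟩ :=
    stmt14_general zstar σ W s t lipschitz_const_lt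
  exact ⟨z, ⟨z_le_one, z_fixed⟩, fun z' hz' => z_unique z' hz'.2, z_limit zseq hzT⟩

end PhaseSync
end
end
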